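/- Let a, b, c ≥ 0 and let P be a polynomial extension of Φ_{a,b,c}. Then for all complex numbers α, β and γ_1, …, γ_{a+b} with α ≠ γ_k for every k, P(α,…,α; β,…,β; γ_1,…,γ_{a+b}) = (α − β)^{ab} · ∏_{k=1}^{a+b} (α − γ_k)^{c} · Σ_T ∏_{u ∈ cells(T)} (γ_{T(u)} − β)/(α − γ_{T(u)}), where the sum runs over all semistandard Young tableaux T of rectangular shape b × c with entries in {1,…,a+b}; i.e. the right-hand Schur-function factor is the Schur polynomial of the rectangular partition (c^b) evaluated at the numbers (γ_k − β)/(α − γ_k), k = 1,…,a+b. (This is the Schur-function formula, Eq. (4.3) of the paper, with signs fixed by the explicit definition of Φ.) -/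

import Mathlib

/-- Eq. (2.6) of the paper: the explicit formula for the component of the O(1) loop model
ground state corresponding to three series of nested arches of sizes `a`, `b`, `c`. -/
noncomputable def Phi (a b c : ℕ) (α : Fin (b + c) → ℂ) (β : Fin (a + c) → ℂ)
    (γ : Fin (a + b) → ℂ) : ℂ :=
  ∑ I ∈ Finset.powersetCard c (Finset.univ : Finset (Fin (b + c))),
    ((∏ i ∈ Iᶜ, ∏ j, (α i - β j)) * ∏ i ∈ I, ∏ k, (α i - γ k)) /
      ∏ i ∈ I, ∏ j ∈ Iᶜ, (α i - α j)

/-- A function `P : ℂ^{b+c} × ℂ^{a+c} × ℂ^{a+b} → ℂ` is a polynomial function if it is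
given by the evaluation of a multivariate polynomial in all of the variables. -/
def IsPolyFun (a b c : ℕ)
    (P : (Fin (b + c) → ℂ) → (Fin (a + c) → ℂ) → (Fin (a + b) → ℂ) → ℂ) : Prop :=
  ∃ p : MvPolynomial (Fin (b + c) ⊕ Fin (a + c) ⊕ Fin (a + b)) ℂ,
    ∀ α β γ, P α β γ = MvPolynomial.eval (Sum.elim α (Sum.elim β γ)) p

/-- Semistandard Young tableaux of rectangular shape `b × c` (rows indexed by `Fin b`,
columns by `Fin c`) with entries in `{1, …, a+b}` (modelled as `Fin (a + b)`): rows are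
weakly increasing left to right and columns strictly increasing top to bottom. -/
def IsRectSSYT (a b c : ℕ) (T : Fin b → Fin c → Fin (a + b)) : Prop :=
  (∀ (i : Fin b) (j j' : Fin c), j ≤ j' → T i j ≤ T i j') ∧
    (∀ (i i' : Fin b) (j : Fin c), i < i' → T i j < T i' j)

instance (a b c : ℕ) : DecidablePred (IsRectSSYT a b c) := fun _ => by
  unfold IsRectSSYT; infer_instance

/-!
A Möbius coordinate `t` with `α ↔ 0` and `β ↔ ∞` moves the nodes `αᵢ` to `tᵢ`. There `Φ` becomes,
up to the prefactor and a power of `∏ (1 - tᵢ)`, the sum over `c`-subsets `I` of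
`∏_{i ∈ I} E(tᵢ) / ∏_{i ∈ I, j ∉ I} (tᵢ - tⱼ)`, where `E` is the generating polynomial of the
elementary symmetric polynomials in `(γₖ - β) / (α - γₖ)`. By Cauchy–Binet this sum is a determinant
of divided differences of the polynomials `X ^ m * E`. As all `tᵢ` tend to `0`, they tend to
coefficients of `E`, and the determinant becomes the dual Jacobi–Trudi determinant of the rectangle.
Removing the largest letter of the alphabet again and again expands the latter over semistandard
tableaux. The case `α = β` follows by continuity in `β`.
-/

open Filter Topology Polynomial

section CauchyBinet

variable {R : Type*} [CommRing R]

theorem det_mul_eq_sum_prod_mul_det_submatrix {m ι : Type*} [Fintype m] [DecidableEq m] [Fintype ι]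
    (A : Matrix m ι R) (B : Matrix ι m R) :
    (A * B).det = ∑ f : m → ι, (∏ p, A p (f p)) * (B.submatrix f id).det := by
  classical
  have hrows : A * B = fun p => ∑ i, A p i • B i := by
    ext p q
    simp [Matrix.mul_apply]
  change Matrix.detRowAlternating.toMultilinearMap (A * B) = _
  rw [hrows, MultilinearMap.map_sum]
  refine Finset.sum_congr rfl fun f _ => ?_
  rw [MultilinearMap.map_smul_univ]
  rfl

variable {ι : Type*} [LinearOrder ι] {k : ℕ}

theorem exists_orderEmbOfFin_comp_perm_eq {f : Fin k → ι} (hf : Function.Injective f) :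
    ∃ (I : Set.powersetCard ι k) (σ : Equiv.Perm (Fin k)), I.1.orderEmbOfFin I.2 ∘ σ = f := by
  have hmono : StrictMono (f ∘ Tuple.sort f) :=
    (Tuple.monotone_sort f).strictMono_of_injective (hf.comp (Tuple.sort f).injective)
  set e : Fin k ↪o ι := OrderEmbedding.ofStrictMono _ hmono
  refine ⟨Set.powersetCard.ofFinEmbEquiv e, (Tuple.sort f).symm, ?_⟩
  rw [← Set.powersetCard.ofFinEmbEquiv_symm_apply, Equiv.symm_apply_apply]
  ext p
  simp [e]

theorem injective_orderEmbOfFin_comp_perm :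
    Function.Injective fun x : Set.powersetCard ι k × Equiv.Perm (Fin k) =>
      (x.1.1.orderEmbOfFin x.1.2 : Fin k → ι) ∘ x.2 := by
  rintro ⟨I, σ⟩ ⟨J, τ⟩ h
  have hrange := congrArg Set.range h
  simp only [EquivLike.range_comp] at hrange
  obtain rfl : I = J := Subtype.ext <| Finset.coe_injective <|
    (I.1.range_orderEmbOfFin I.2).symm.trans (hrange.trans (J.1.range_orderEmbOfFin J.2))
  have hστ : σ = τ := Equiv.ext fun p => (I.1.orderEmbOfFin I.2).injective (congrFun h p)
  rw [hστ]

/-- The **Cauchy–Binet formula**. -/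
theorem det_mul_eq_sum_powersetCard [Fintype ι] (A : Matrix (Fin k) ι R) (B : Matrix ι (Fin k) R) :
    (A * B).det = ∑ I : Set.powersetCard ι k,
      (A.submatrix id (I.1.orderEmbOfFin I.2)).det *
        (B.submatrix (I.1.orderEmbOfFin I.2) id).det := by
  simp_rw [det_mul_eq_sum_prod_mul_det_submatrix, ← Matrix.det_transpose (A.submatrix _ _),
    Matrix.det_apply' (Matrix.transpose _), Finset.sum_mul]
  rw [← Fintype.sum_prod_type']
  refine (Finset.sum_of_injOn _ injective_orderEmbOfFin_comp_perm.injOn (by simp) ?_ ?_).symm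
  · intro f _ hf
    suffices ¬ Function.Injective f by
      obtain ⟨p, q, hpq, hne⟩ := Function.not_injective_iff.mp this
      rw [Matrix.det_zero_of_row_eq hne (by ext; simp [hpq]), mul_zero]
    intro hinj
    obtain ⟨I, σ, rfl⟩ := exists_orderEmbOfFin_comp_perm_eq hinj
    exact hf ⟨(I, σ), by simp, rfl⟩
  · rintro ⟨I, σ⟩ _
    rw [← Function.id_comp id, ← Matrix.submatrix_submatrix, Matrix.det_permute]
    simp only [Matrix.transpose_apply, Matrix.submatrix_apply, id, Function.comp_id,
      Function.comp_apply]
    ring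

end CauchyBinet

section DividedDifference

theorem det_vandermonde_mul_det_projVandermonde {R : Type*} [CommRing R] {k : ℕ} (v : Fin k → R) :
    (Matrix.vandermonde v).det * (Matrix.projVandermonde 1 v).det =
      ∏ p, ∏ q ∈ Finset.univ.erase p, (v p - v q) := by
  rw [mul_comm, Matrix.det_vandermonde, Matrix.det_projVandermonde]
  simp only [Pi.one_apply, one_mul, ← Finset.prod_mul_distrib]
  simpa only [Finset.compl_singleton] using
    Finset.prod_prod_Ioi_mul_eq_prod_prod_off_diag fun p q => v q - v p

theorem prod_prod_erase_eq_mul_prod_prod_compl {M ι : Type*} [CommMonoid M] [Fintype ι]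
    [DecidableEq ι] (f : ι → ι → M) (I : Finset ι) :
    ∏ i ∈ I, ∏ j ∈ Finset.univ.erase i, f i j =
      (∏ i ∈ I, ∏ j ∈ I.erase i, f i j) * ∏ i ∈ I, ∏ j ∈ Iᶜ, f i j := by
  rw [← Finset.prod_mul_distrib]
  refine Finset.prod_congr rfl fun i hi => ?_
  have hunion : Finset.univ.erase i = I.erase i ∪ Iᶜ := by
    rw [Finset.union_comm, Finset.compl_eq_univ_sdiff,
      Finset.sdiff_union_erase_cancel (Finset.subset_univ I) hi]
  rw [hunion, Finset.prod_union (disjoint_compl_right.mono_left (I.erase_subset i))]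

variable {K ι : Type*} [Field K] [Fintype ι]

theorem sum_powersetCard_prod_div_eq_det [LinearOrder ι] {t : ι → K} (ht : Function.Injective t)
    (h : ι → K) (k : ℕ) :
    ∑ I ∈ Finset.powersetCard k (Finset.univ : Finset ι),
        (∏ i ∈ I, h i) / ∏ i ∈ I, ∏ j ∈ Iᶜ, (t i - t j) =
      (Matrix.of fun p q : Fin k =>
        ∑ i, t i ^ (p + q.rev : ℕ) * h i / ∏ j ∈ Finset.univ.erase i, (t i - t j)).det := by
  set g : ι → K := fun i => h i / ∏ j ∈ Finset.univ.erase i, (t i - t j) with hg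
  have hmul : (Matrix.of fun p q : Fin k =>
      ∑ i, t i ^ (p + q.rev : ℕ) * h i / ∏ j ∈ Finset.univ.erase i, (t i - t j)) =
      (Matrix.of fun (p : Fin k) i => g i * t i ^ (p : ℕ)) * Matrix.rectVandermonde 1 t k := by
    ext p q
    simp only [Matrix.of_apply, Matrix.mul_apply, Matrix.rectVandermonde_apply, Pi.one_apply,
      one_pow, one_mul, hg]
    exact Finset.sum_congr rfl fun i _ => by ring
  rw [hmul, det_mul_eq_sum_powersetCard, Finset.sum_subtype _ (p := (· ∈ Set.powersetCard ι k))
    (by simp [Set.powersetCard.mem_iff])]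
  refine Finset.sum_congr rfl fun I _ => ?_
  set e := I.1.orderEmbOfFin I.2
  have himage : Finset.univ.image e = I.1 := I.1.image_orderEmbOfFin_univ I.2
  have hprod (f : ι → K) : ∏ p, f (e p) = ∏ i ∈ I.1, f i := by
    rw [← himage, Finset.prod_image e.injective.injOn]
  have hA : ((Matrix.of fun (p : Fin k) i => g i * t i ^ (p : ℕ)).submatrix id e).det =
      (∏ i ∈ I.1, g i) * (Matrix.vandermonde (t ∘ e)).det := by
    rw [← Matrix.det_transpose, ← hprod, ← Matrix.det_mul_column]
    rfl
  have hvandermonde : (Matrix.vandermonde (t ∘ e)).det *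
      ((Matrix.rectVandermonde 1 t k).submatrix e id).det =
      ∏ i ∈ I.1, ∏ j ∈ I.1.erase i, (t i - t j) := by
    rw [← hprod]
    refine (det_vandermonde_mul_det_projVandermonde (t ∘ e)).trans
      (Finset.prod_congr rfl fun p _ => ?_)
    simp only [Function.comp_apply]
    rw [← Finset.prod_image (f := fun j => t (e p) - t j) e.injective.injOn,
      Finset.image_erase e.injective, himage]
  have hne : ∏ i ∈ I.1, ∏ j ∈ I.1.erase i, (t i - t j) ≠ 0 :=
    Finset.prod_ne_zero_iff.mpr fun i _ => Finset.prod_ne_zero_iff.mpr fun j hj =>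
      sub_ne_zero.mpr (ht.ne (Finset.ne_of_mem_erase hj).symm)
  rw [hA, mul_assoc, hvandermonde, hg, Finset.prod_div_distrib,
    prod_prod_erase_eq_mul_prod_prod_compl, div_mul_eq_mul_div, mul_comm (∏ i ∈ I.1, h i),
    mul_div_mul_left _ _ hne]

variable [DecidableEq ι]

theorem prod_erase_mul_sub_mul (s : K) (τ : ι → K) (i : ι) :
    ∏ j ∈ Finset.univ.erase i, (s * τ i - s * τ j) =
      s ^ (Fintype.card ι - 1) * ∏ j ∈ Finset.univ.erase i, (τ i - τ j) := by
  simp_rw [← mul_sub]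
  rw [Finset.prod_mul_distrib, Finset.prod_const, Finset.card_erase_of_mem (Finset.mem_univ i),
    Finset.card_univ]

variable [TopologicalSpace K] [IsTopologicalRing K]

theorem tendsto_sum_eval_div_prod [Nonempty ι] {τ : ι → K} (hτ : Function.Injective τ) (H : K[X]) :
    Tendsto (fun s => ∑ i, H.eval (s * τ i) / ∏ j ∈ Finset.univ.erase i, (s * τ i - s * τ j))
      (𝓝[≠] 0) (𝓝 (H.coeff (Fintype.card ι - 1))) := by
  induction H using Polynomial.induction_on' with
  | add p q hp hq =>
    simpa only [eval_add, add_div, Finset.sum_add_distrib, coeff_add] using hp.add hq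
  | monomial m z =>
    rcases le_or_gt m (Fintype.card ι - 1) with hm | hm
    · refine tendsto_const_nhds.congr' ?_
      filter_upwards [self_mem_nhdsWithin] with s hs
      have hinj : Function.Injective fun i => s * τ i := fun i j h => hτ (mul_left_cancel₀ hs h)
      have hdeg : (monomial m z).degree < (Finset.univ : Finset ι).card :=
        (degree_monomial_le m z).trans_lt <| by
          have := Fintype.card_pos (α := ι)
          rw [Finset.card_univ]
          exact_mod_cast (by omega : m < Fintype.card ι)
      exact Lagrange.coeff_eq_sum hinj.injOn hdeg
    · rw [coeff_monomial, if_neg hm.ne']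
      have hscale : Tendsto (fun s : K => s ^ (m - (Fintype.card ι - 1)) *
          ∑ i, z * τ i ^ m / ∏ j ∈ Finset.univ.erase i, (τ i - τ j)) (𝓝[≠] 0) (𝓝 0) := by
        refine Tendsto.mono_left ?_ nhdsWithin_le_nhds
        refine (Continuous.tendsto' (by fun_prop) 0 0 ?_)
        rw [zero_pow (by omega), zero_mul]
      refine hscale.congr' ?_
      filter_upwards [self_mem_nhdsWithin] with s (hs : s ≠ 0)
      rw [Finset.mul_sum]
      refine Finset.sum_congr rfl fun i _ => ?_
      rw [prod_erase_mul_sub_mul, eval_monomial, mul_pow, ← Nat.sub_add_cancel hm.le, pow_add s,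
        Nat.add_sub_cancel]
      field_simp

end DividedDifference

section ElementarySymmetric

variable {R : Type*} [CommSemiring R]

/-- The coefficient of `X ^ k` in `H` for an integer exponent `k`, zero for `k < 0`, so that
Jacobi–Trudi entries need no case distinction. -/
def intCoeff (H : R[X]) : ℤ → R
  | .ofNat k => H.coeff k
  | .negSucc _ => 0

theorem intCoeff_of_neg (H : R[X]) {k : ℤ} (hk : k < 0) : intCoeff H k = 0 := by
  cases k with
  | ofNat k => exact absurd hk (Int.natCast_nonneg k).not_gt
  | negSucc k => rfl

theorem coeff_X_pow_mul_eq_intCoeff (H : R[X]) (m n : ℕ) :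
    (X ^ m * H).coeff n = intCoeff H (n - m) := by
  rw [coeff_X_pow_mul']
  split_ifs with h
  · rw [← Int.ofNat_sub h]
    rfl
  · rw [intCoeff_of_neg H (by omega)]

theorem intCoeff_one (k : ℤ) : intCoeff (1 : R[X]) k = if k = 0 then 1 else 0 := by
  cases k with
  | ofNat k => simp [intCoeff, coeff_one]
  | negSucc k => rfl

theorem intCoeff_mul_one_add (H : R[X]) (y : R) (k : ℤ) :
    intCoeff (H * (1 + C y * X)) k = intCoeff H k + y * intCoeff H (k - 1) := by
  rw [mul_add, mul_one, mul_left_comm]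
  rcases k with (_ | k) | k
  · rw [intCoeff_of_neg H (k := Int.ofNat 0 - 1) (by decide)]
    simp [intCoeff]
  · rw [show Int.ofNat (k + 1) - 1 = Int.ofNat k by simp]
    simp [intCoeff]
  · have hk := Int.negSucc_lt_zero k
    rw [intCoeff_of_neg _ hk, intCoeff_of_neg _ hk, intCoeff_of_neg _ (by omega), mul_zero,
      add_zero]

/-- The generating polynomial `∏ (1 + y k X)` of the elementary symmetric polynomials in `y`. -/
noncomputable def elemGen {n : ℕ} (y : Fin n → R) : R[X] := ∏ k, (1 + C (y k) * X)

theorem elemGen_succ {n : ℕ} (y : Fin (n + 1) → R) :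
    elemGen y = elemGen (Fin.init y) * (1 + C (y (Fin.last n)) * X) :=
  Fin.prod_univ_castSucc _

end ElementarySymmetric

section ConfluentNodes

variable {K ι : Type*} [Field K] [TopologicalSpace K] [IsTopologicalRing K] [Fintype ι]
  [LinearOrder ι]

/-- The sum is the determinant of the divided differences of `X ^ (p + (c - 1 - q)) * h`, and these
tend to coefficients of `h` as the nodes merge. -/
theorem tendsto_sum_powersetCard_prod_eval_div {b c : ℕ} (hcard : Fintype.card ι = b + c)
    {τ : ι → K} (hτ : Function.Injective τ) (h : K[X]) :
    Tendsto (fun s => ∑ I ∈ Finset.powersetCard c (Finset.univ : Finset ι),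
        (∏ i ∈ I, h.eval (s * τ i)) / ∏ i ∈ I, ∏ j ∈ Iᶜ, (s * τ i - s * τ j))
      (𝓝[≠] 0) (𝓝 (Matrix.of fun p q : Fin c => intCoeff h (b - p + q)).det) := by
  have hentry (p q : Fin c) : Tendsto (fun s => ∑ i, (s * τ i) ^ (p + q.rev : ℕ) *
      h.eval (s * τ i) / ∏ j ∈ Finset.univ.erase i, (s * τ i - s * τ j))
      (𝓝[≠] 0) (𝓝 (intCoeff h (b - p + q))) := by
    have : Nonempty ι := Fintype.card_pos_iff.mp (by have := p.pos; omega)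
    have hindex : ((Fintype.card ι - 1 : ℕ) : ℤ) - (p + q.rev : ℕ) = b - p + q := by
      rw [Fin.val_rev]
      omega
    rw [← hindex, ← coeff_X_pow_mul_eq_intCoeff]
    have hlim := tendsto_sum_eval_div_prod hτ (X ^ (p + q.rev : ℕ) * h)
    simp_rw [Polynomial.eval_mul, Polynomial.eval_pow, eval_X] at hlim
    exact hlim
  have hdet := (continuous_id.matrix_det.tendsto _).comp
    (tendsto_pi_nhds.mpr fun p => tendsto_pi_nhds.mpr (hentry p))
  refine hdet.congr' ?_
  filter_upwards [self_mem_nhdsWithin] with s hs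
  have hinj : Function.Injective fun i => s * τ i := fun i j hij => hτ (mul_left_cancel₀ hs hij)
  exact (sum_powersetCard_prod_div_eq_det hinj _ c).symm

end ConfluentNodes

section DualJacobiTrudi

variable {R : Type*} [CommRing R] {n c : ℕ}

/-- The dual Jacobi–Trudi determinant `det (e_{l p - p + q}(y))`: the Schur polynomial in `y` of the
diagram with column lengths `l`. -/
noncomputable def dualJacobiTrudi (y : Fin n → R) (l : Fin c → ℤ) : R :=
  (Matrix.of fun p q : Fin c => intCoeff (elemGen y) (l p - p + q)).det

/-- The column lengths that remain when the bottom box of each column in `s` is removed. -/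
def removeBoxes (l : Fin c → ℤ) (s : Finset (Fin c)) : Fin c → ℤ :=
  fun j => l j - if j ∈ s then 1 else 0

/-- By `intCoeff_mul_one_add` each row of the determinant is a sum of two rows; expand over the set
`s` of rows in which the second one is taken. -/
theorem dualJacobiTrudi_succ (y : Fin (n + 1) → R) (l : Fin c → ℤ) :
    dualJacobiTrudi y l = ∑ s : Finset (Fin c),
      y (Fin.last n) ^ s.card * dualJacobiTrudi (Fin.init y) (removeBoxes l s) := by
  set z := y (Fin.last n)
  set E := intCoeff (elemGen (Fin.init y))
  let D := (Matrix.detRowAlternating (n := Fin c) (R := R)).toMultilinearMap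
  let u : Fin c → Fin c → R := fun p q => E (l p - p + q)
  let v : Fin c → Fin c → R := fun p q => E (l p - p + q - 1)
  have hsplit : dualJacobiTrudi y l = D ((fun p => z • v p) + u) := by
    change Matrix.det _ = Matrix.det _
    congr 1
    ext p q
    simp only [Matrix.of_apply, elemGen_succ, intCoeff_mul_one_add, Pi.add_apply, Pi.smul_apply,
      smul_eq_mul, E, z, u, v]
    ring
  rw [hsplit, MultilinearMap.map_add_univ]
  refine Finset.sum_congr rfl fun s _ => ?_
  have hscale : s.piecewise (fun p => z • v p) u =
      s.piecewise (fun p => z • s.piecewise v u p) (s.piecewise v u) := by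
    ext p q
    by_cases hp : p ∈ s <;> simp [hp]
  rw [hscale, MultilinearMap.map_piecewise_smul D (fun _ => z), Finset.prod_const, smul_eq_mul]
  congr 1
  change Matrix.det _ = Matrix.det _
  congr 1
  ext p q
  by_cases hp : p ∈ s
  · simp only [hp, Finset.piecewise_eq_of_mem, Matrix.of_apply, removeBoxes, if_true, v]
    congr 1
    ring
  · simp [hp, u, removeBoxes, E]

theorem antitone_of_adjacent {α : Type*} [Preorder α] {f : Fin c → α}
    (h : ∀ i j : Fin c, (j : ℕ) = i + 1 → f j ≤ f i) : Antitone f := by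
  cases c with
  | zero => exact fun i => i.elim0
  | succ c => exact Fin.antitone_iff_succ_le.mpr fun i => h i.castSucc i.succ (by simp)

theorem dualJacobiTrudi_removeBoxes_eq_zero (y : Fin n → R) {l : Fin c → ℤ} (hl : Antitone l)
    {s : Finset (Fin c)} (hs : ¬ Antitone (removeBoxes l s)) :
    dualJacobiTrudi y (removeBoxes l s) = 0 := by
  obtain ⟨i, j, hij, hlt⟩ : ∃ i j : Fin c, (j : ℕ) = i + 1 ∧
      removeBoxes l s i < removeBoxes l s j := by
    by_contra! hle
    exact hs (antitone_of_adjacent hle)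
  have hle : l j ≤ l i := hl (Fin.le_def.mpr (by omega))
  have hrow : removeBoxes l s j = removeBoxes l s i + 1 := by
    simp only [removeBoxes] at hlt ⊢
    split_ifs at hlt ⊢ <;> omega
  refine Matrix.det_zero_of_row_eq (i := i) (j := j) (by rintro rfl; omega) ?_
  ext q
  simp only [Matrix.of_apply, hrow, hij]
  congr 1
  push_cast
  ring

theorem dualJacobiTrudi_zero (y : Fin 0 → R) {l : Fin c → ℤ} (hl : Antitone l) :
    dualJacobiTrudi y l = if l = 0 then 1 else 0 := by
  have hgen : elemGen y = 1 := Fin.prod_univ_zero _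
  simp only [dualJacobiTrudi, hgen, intCoeff_one]
  split_ifs with h
  · subst h
    convert Matrix.det_one (n := Fin c) (R := R) using 2
    ext p q
    simp only [Matrix.of_apply, Matrix.one_apply, Pi.zero_apply]
    exact if_congr (by rw [Fin.ext_iff]; omega) rfl rfl
  · by_contra hne
    have hrow (p : Fin c) : ∃ q : Fin c, l p - p + q = 0 := by
      by_contra! hp
      exact hne (Matrix.det_eq_zero_of_row_eq_zero p fun q => if_neg (hp q))
    choose f hf using hrow
    have hmono : StrictMono f := fun i j hij => by
      have := hl hij.le
      have := hf i
      have := hf j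
      rw [Fin.lt_def] at hij ⊢
      omega
    refine h (funext fun p => ?_)
    have hfix : f p = p := le_antisymm (hmono.le_id p) (hmono.id_le p)
    simpa [hfix] using hf p

end DualJacobiTrudi

section ColumnPattern

variable {n c : ℕ}

/-- For `w k` the set of columns of a filling that contain the letter `k`, the number of letters
less than `m` in the column `j`. -/
def letterCount (w : Fin n → Finset (Fin c)) (m : ℕ) (j : Fin c) : ℕ :=
  (Finset.univ.filter fun k : Fin n => (k : ℕ) < m ∧ j ∈ w k).card

/-- A semistandard tableau with column lengths `l`, encoded by the sets `w k` of columns that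
contain the letter `k`: for every `m`, the letters less than `m` fill a diagram. -/
def IsColumnPattern (l : Fin c → ℤ) (w : Fin n → Finset (Fin c)) : Prop :=
  (∀ j, (letterCount w n j : ℤ) = l j) ∧ ∀ m ≤ n, Antitone (letterCount w m)

theorem IsColumnPattern.antitone {l : Fin c → ℤ} {w : Fin n → Finset (Fin c)}
    (h : IsColumnPattern l w) : Antitone l := fun i j hij => by
  rw [← h.1, ← h.1]
  exact_mod_cast h.2 n le_rfl hij

theorem letterCount_snoc_of_le (w : Fin n → Finset (Fin c)) (s : Finset (Fin c)) {m : ℕ}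
    (hm : m ≤ n) :
    letterCount (Fin.snoc w s : Fin (n + 1) → Finset (Fin c)) m = letterCount w m := by
  ext j
  simp only [letterCount, Finset.card_filter, Fin.sum_univ_castSucc, Fin.snoc_castSucc,
    Fin.val_castSucc, Fin.val_last, hm.not_gt, false_and, if_false, add_zero]

theorem letterCount_snoc_succ (w : Fin n → Finset (Fin c)) (s : Finset (Fin c)) (j : Fin c) :
    letterCount (Fin.snoc w s : Fin (n + 1) → Finset (Fin c)) (n + 1) j =
      letterCount w n j + if j ∈ s then 1 else 0 := by
  simp only [letterCount, Finset.card_filter, Fin.sum_univ_castSucc, Fin.snoc_castSucc,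
    Fin.snoc_last, Fin.is_lt, true_and]

theorem isColumnPattern_snoc {l : Fin c → ℤ} (hl : Antitone l) (w : Fin n → Finset (Fin c))
    (s : Finset (Fin c)) :
    IsColumnPattern l (Fin.snoc w s : Fin (n + 1) → Finset (Fin c)) ↔
      IsColumnPattern (removeBoxes l s) w := by
  have hlength (j : Fin c) :
      (letterCount (Fin.snoc w s : Fin (n + 1) → Finset (Fin c)) (n + 1) j : ℤ) = l j ↔
        (letterCount w n j : ℤ) = removeBoxes l s j := by
    rw [letterCount_snoc_succ, removeBoxes, eq_sub_iff_add_eq]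
    push_cast
    rfl
  rw [IsColumnPattern, IsColumnPattern, forall_congr' hlength]
  refine and_congr_right fun hcount => ⟨fun h m hm => ?_, fun h m hm => ?_⟩
  · rw [← letterCount_snoc_of_le w s hm]
    exact h m (hm.trans n.le_succ)
  · rcases hm.lt_or_eq with hlt | rfl
    · rw [letterCount_snoc_of_le w s (Nat.le_of_lt_succ hlt)]
      exact h m (Nat.le_of_lt_succ hlt)
    · intro i j hij
      have hle := hl hij
      rw [← (hlength i).mpr (hcount i), ← (hlength j).mpr (hcount j)] at hle
      exact_mod_cast hle

variable {R : Type*} [CommRing R]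

open scoped Classical in
/-- The **dual Jacobi–Trudi identity**. Removing the largest letter from a tableau matches
`dualJacobiTrudi_succ`, and the terms there whose column lengths are not antitone vanish. -/
theorem dualJacobiTrudi_eq_sum_isColumnPattern (y : Fin n → R) {l : Fin c → ℤ} (hl : Antitone l) :
    dualJacobiTrudi y l = ∑ w with IsColumnPattern l w, ∏ k, y k ^ (w k).card := by
  rw [Finset.sum_filter]
  induction n generalizing l with
  | zero =>
    have hpattern : l = 0 ↔ IsColumnPattern l (default : Fin 0 → Finset (Fin c)) := by
      simp [IsColumnPattern, letterCount, Antitone, funext_iff, eq_comm]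
    rw [dualJacobiTrudi_zero y hl, Fintype.sum_unique, Fin.prod_univ_zero]
    exact if_congr hpattern rfl rfl
  | succ n ih =>
    rw [dualJacobiTrudi_succ, ← (Fin.snocEquiv fun _ => Finset (Fin c)).sum_comp,
      Fintype.sum_prod_type]
    refine Finset.sum_congr rfl fun s _ => ?_
    have hterm (w : Fin n → Finset (Fin c)) :
        (if IsColumnPattern l (Fin.snocEquiv (fun _ => Finset (Fin c)) (s, w)) then
          ∏ k, y k ^ (Fin.snocEquiv (fun _ => Finset (Fin c)) (s, w) k).card else 0) =
        y (Fin.last n) ^ s.card *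
          if IsColumnPattern (removeBoxes l s) w then ∏ k, Fin.init y k ^ (w k).card else 0 := by
      rw [mul_ite, mul_zero]
      refine if_congr (isColumnPattern_snoc hl w s) ?_ rfl
      rw [Fin.prod_univ_castSucc, mul_comm]
      simp [Fin.snocEquiv, Fin.init]
    simp_rw [hterm, ← Finset.mul_sum]
    congr 1
    by_cases hs : Antitone (removeBoxes l s)
    · exact ih _ hs
    · rw [dualJacobiTrudi_removeBoxes_eq_zero _ hl hs]
      exact (Finset.sum_eq_zero fun w _ => if_neg fun h => hs h.antitone).symm

end ColumnPattern

section Tableau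

theorem card_filter_lt_anti {ι α : Type*} [Fintype ι] [Preorder α] [DecidableLT α] {f g : ι → α}
    (hfg : f ≤ g) (m : α) :
    (Finset.univ.filter fun i => g i < m).card ≤ (Finset.univ.filter fun i => f i < m).card :=
  Finset.card_le_card (Finset.monotone_filter_right _ fun i _ hi => (hfg i).trans_lt hi)

theorem le_of_card_filter_lt_le {b : ℕ} {α : Type*} [LinearOrder α] {f g : Fin b → α}
    (hf : StrictMono f) (hg : Monotone g) {i : Fin b}
    (h : (Finset.univ.filter fun k => g k < f i).card ≤
      (Finset.univ.filter fun k => f k < f i).card) : f i ≤ g i := by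
  by_contra! hlt
  have hIio : (Finset.univ.filter fun k => f k < f i) = Finset.Iio i := by
    ext k
    simp [hf.lt_iff_lt]
  have hIic : Finset.Iic i ⊆ Finset.univ.filter fun k => g k < f i := fun k hk =>
    Finset.mem_filter.mpr ⟨Finset.mem_univ k, (hg (Finset.mem_Iic.mp hk)).trans_lt hlt⟩
  have hcard := (Finset.card_le_card hIic).trans h
  rw [hIio, Fin.card_Iic, Fin.card_Iio] at hcard
  omega

variable {a b c n : ℕ}

theorem isRectSSYT_iff {T : Fin b → Fin c → Fin (a + b)} :
    IsRectSSYT a b c T ↔ (∀ i, Monotone (T i)) ∧ ∀ j, StrictMono fun i => T i j :=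
  ⟨fun h => ⟨fun i _ _ hj => h.1 i _ _ hj, fun j _ _ hi => h.2 _ _ j hi⟩,
    fun h => ⟨fun i _ _ hj => h.1 i hj, fun _ _ j hi => h.2 j hi⟩⟩

/-- The set of columns of the filling `T` in which the letter `k` occurs. -/
def columnsContaining (T : Fin b → Fin c → Fin n) (k : Fin n) : Finset (Fin c) :=
  Finset.univ.filter fun j => ∃ i, T i j = k

theorem mem_columnsContaining {T : Fin b → Fin c → Fin n} {k : Fin n} {j : Fin c} :
    j ∈ columnsContaining T k ↔ ∃ i, T i j = k := by
  simp [columnsContaining]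

theorem letterCount_columnsContaining {T : Fin b → Fin c → Fin n} {j : Fin c}
    (hT : Function.Injective fun i => T i j) (m : ℕ) :
    letterCount (columnsContaining T) m j =
      (Finset.univ.filter fun i => (T i j : ℕ) < m).card := by
  rw [← Finset.card_image_of_injective _ hT, letterCount]
  congr 1
  ext k
  simp only [mem_columnsContaining, Finset.mem_filter, Finset.mem_univ, true_and, Finset.mem_image]
  constructor
  · rintro ⟨hk, i, rfl⟩
    exact ⟨i, hk, rfl⟩
  · rintro ⟨i, hk, rfl⟩
    exact ⟨hk, i, rfl⟩

theorem isColumnPattern_columnsContaining_iff {T : Fin b → Fin c → Fin n}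
    (hT : ∀ j, StrictMono fun i => T i j) :
    IsColumnPattern (fun _ => (b : ℤ)) (columnsContaining T) ↔ ∀ i, Monotone (T i) := by
  have hcount (m : ℕ) (j : Fin c) := letterCount_columnsContaining (hT j).injective m
  constructor
  · intro h i j j' hj
    refine le_of_card_filter_lt_le (hT j) (hT j').monotone ?_
    simpa only [hcount, Fin.val_fin_lt] using h.2 (T i j) (T i j).is_lt.le hj
  · refine fun h => ⟨fun j => by simp [hcount], fun m _ j j' hj => ?_⟩
    rw [hcount, hcount]
    exact card_filter_lt_anti (f := fun i => (T i j : ℕ)) (fun i => h i hj) m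

theorem columnsContaining_injOn :
    Set.InjOn columnsContaining {T : Fin b → Fin c → Fin n | ∀ j, StrictMono fun i => T i j} := by
  intro T hT T' hT' h
  suffices ∀ j, (fun i => T i j) = fun i => T' i j from
    funext fun i => funext fun j => congrFun (this j) i
  refine fun j => ((hT j).range_inj (hT' j)).mp (Set.ext fun k => ?_)
  simp only [Set.mem_range, ← mem_columnsContaining, h]

theorem exists_columnsContaining_eq {w : Fin n → Finset (Fin c)}
    (hw : ∀ j, letterCount w n j = b) :
    ∃ T : Fin b → Fin c → Fin n, (∀ j, StrictMono fun i => T i j) ∧ columnsContaining T = w := by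
  unfold letterCount at hw
  refine ⟨fun i j => Finset.orderEmbOfFin _ (hw j) i, fun j => OrderEmbedding.strictMono _,
    funext fun k => Finset.ext fun j => ?_⟩
  rw [mem_columnsContaining, ← Set.mem_range, Finset.range_orderEmbOfFin]
  simp

theorem prod_pow_card_columnsContaining {M : Type*} [CommMonoid M] {T : Fin b → Fin c → Fin n}
    (hT : ∀ j, Function.Injective fun i => T i j) (y : Fin n → M) :
    ∏ k, y k ^ (columnsContaining T k).card = ∏ i, ∏ j, y (T i j) := by
  simp_rw [← Finset.prod_const]
  rw [Finset.prod_comm' (t' := Finset.univ) (s' := fun j => Finset.univ.image fun i => T i j)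
    (by simp [mem_columnsContaining]), Finset.prod_comm]
  exact Finset.prod_congr rfl fun j _ => Finset.prod_image (hT j).injOn

theorem sum_isRectSSYT_eq_dualJacobiTrudi {R : Type*} [CommRing R] (y : Fin (a + b) → R) :
    ∑ T : Fin b → Fin c → Fin (a + b) with IsRectSSYT a b c T, ∏ i, ∏ j, y (T i j) =
      dualJacobiTrudi y fun _ : Fin c => (b : ℤ) := by
  classical
  rw [dualJacobiTrudi_eq_sum_isColumnPattern y antitone_const]
  simp only [isRectSSYT_iff]
  refine Finset.sum_nbij columnsContaining (fun T hT => ?_)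
    (columnsContaining_injOn.mono fun T hT => ?_) (fun w hw => ?_) fun T hT => ?_
  · obtain ⟨hrow, hcol⟩ := (Finset.mem_filter.mp hT).2
    exact Finset.mem_filter.mpr
      ⟨Finset.mem_univ _, (isColumnPattern_columnsContaining_iff hcol).mpr hrow⟩
  · exact (Finset.mem_filter.mp hT).2.2
  · have hw := (Finset.mem_filter.mp hw).2
    obtain ⟨T, hcol, rfl⟩ := exists_columnsContaining_eq fun j => Int.ofNat_inj.mp (hw.1 j)
    have hrow := (isColumnPattern_columnsContaining_iff hcol).mp hw
    exact ⟨T, Finset.mem_filter.mpr ⟨Finset.mem_univ _, hrow, hcol⟩, rfl⟩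
  · have hcol := (Finset.mem_filter.mp hT).2.2
    exact (prod_pow_card_columnsContaining (fun j => (hcol j).injective) y).symm

end Tableau

section Moebius

variable {K : Type*} [Field K]

/-- The Möbius transformation with `0 ↦ α`, `∞ ↦ β` and `1 ↦ ∞`, used to parametrize nodes near
`α`; it has the junk value `0` at `1`. -/
def moebius (α β t : K) : K := (α - β * t) / (1 - t)

section Point

variable {t : K} (ht : 1 - t ≠ 0)
include ht

theorem moebius_sub_pole (α β : K) : moebius α β t - β = (α - β) / (1 - t) := by
  rw [moebius]
  field_simp
  ring

theorem moebius_sub {α γ : K} (hγ : α ≠ γ) (β : K) :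
    moebius α β t - γ = (α - γ) * (1 + (γ - β) / (α - γ) * t) / (1 - t) := by
  have := sub_ne_zero.mpr hγ
  rw [moebius]
  field_simp
  ring

theorem moebius_sub_moebius (α β : K) {t' : K} (ht' : 1 - t' ≠ 0) :
    moebius α β t - moebius α β t' = (α - β) * (t - t') / ((1 - t) * (1 - t')) := by
  rw [moebius, moebius]
  field_simp
  ring

theorem prod_moebius_sub {n : ℕ} {α : K} {γ : Fin n → K} (hγ : ∀ k, α ≠ γ k) (β : K) :
    ∏ k, (moebius α β t - γ k) =
      (∏ k, (α - γ k)) * (elemGen fun k => (γ k - β) / (α - γ k)).eval t / (1 - t) ^ n := by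
  simp only [moebius_sub ht (hγ _), Finset.prod_div_distrib, Finset.prod_mul_distrib, elemGen,
    eval_prod, Finset.prod_const, Finset.card_univ, Fintype.card_fin]
  simp

end Point

theorem prod_prod_moebius_sub_moebius {ι : Type*} {t : ι → K} (ht : ∀ i, 1 - t i ≠ 0) (α β : K)
    (I J : Finset ι) :
    ∏ i ∈ I, ∏ j ∈ J, (moebius α β (t i) - moebius α β (t j)) =
      (α - β) ^ (I.card * J.card) * (∏ i ∈ I, ∏ j ∈ J, (t i - t j)) /
        ((∏ i ∈ I, (1 - t i)) ^ J.card * (∏ j ∈ J, (1 - t j)) ^ I.card) := by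
  simp only [moebius_sub_moebius (ht _) α β (ht _), Finset.prod_div_distrib,
    Finset.prod_mul_distrib, Finset.prod_const, Finset.prod_pow, ← pow_mul, mul_comm I.card]

theorem injective_moebius {ι : Type*} {t : ι → K} (ht : ∀ i, 1 - t i ≠ 0)
    (hinj : Function.Injective t) {α β : K} (hαβ : α ≠ β) :
    Function.Injective fun i => moebius α β (t i) := fun i j hij => by
  have hsub := moebius_sub_moebius (ht i) α β (ht j)
  rw [sub_eq_zero.mpr hij, eq_comm, div_eq_zero_iff, mul_eq_zero] at hsub
  exact hinj (by simpa [sub_eq_zero, hαβ, ht i, ht j] using hsub)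

end Moebius

section MoebiusPhi

variable {a b c : ℕ} {α β : ℂ} {γ : Fin (a + b) → ℂ}

theorem Phi_moebius (hαβ : α ≠ β) (hγ : ∀ k, α ≠ γ k) {t : Fin (b + c) → ℂ}
    (ht : ∀ i, 1 - t i ≠ 0) :
    Phi a b c (fun i => moebius α β (t i)) (fun _ => β) γ =
      (α - β) ^ (a * b) * (∏ k, (α - γ k) ^ c) * (((∏ i, (1 - t i)) ^ a)⁻¹ *
        ∑ I ∈ Finset.powersetCard c (Finset.univ : Finset (Fin (b + c))),
          (∏ i ∈ I, (elemGen fun k => (γ k - β) / (α - γ k)).eval (t i)) /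
            ∏ i ∈ I, ∏ j ∈ Iᶜ, (t i - t j)) := by
  simp_rw [Phi, Finset.mul_sum]
  refine Finset.sum_congr rfl fun I hI => ?_
  have hc : I.card = c := (Finset.mem_powersetCard.mp hI).2
  have hb : Iᶜ.card = b := by simp [Finset.card_compl, hc]
  have hpow : (α - β) ^ (b * (a + c)) = (α - β) ^ (a * b) * (α - β) ^ (c * b) := by ring
  have hne (J : Finset (Fin (b + c))) : ∏ i ∈ J, (1 - t i) ≠ 0 :=
    Finset.prod_ne_zero_iff.mpr fun i _ => ht i
  have hprodI := hne I
  have hprodIc := hne Iᶜ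
  have hu := pow_ne_zero (c * b) (sub_ne_zero.mpr hαβ)
  rw [prod_prod_moebius_sub_moebius ht, hc, hb, ← Finset.prod_mul_prod_compl I fun i => 1 - t i,
    Finset.prod_pow]
  simp only [moebius_sub_pole (ht _), prod_moebius_sub (ht _) hγ, Finset.prod_div_distrib,
    Finset.prod_mul_distrib, Finset.prod_const, Finset.prod_pow, Finset.card_univ,
    Fintype.card_fin, hb, hc, ← pow_mul, mul_comm (a + c) b, hpow]
  field_simp
  ring

theorem eventually_one_sub_mul_ne_zero {ι K : Type*} [Finite ι] [Field K] [TopologicalSpace K]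
    [IsTopologicalRing K] [T1Space K] (τ : ι → K) :
    ∀ᶠ s in 𝓝[≠] (0 : K), ∀ i, 1 - s * τ i ≠ 0 := by
  refine nhdsWithin_le_nhds (eventually_all.mpr fun i => ?_)
  have hcont : ContinuousAt (fun s : K => 1 - s * τ i) 0 := by fun_prop
  exact hcont.eventually_ne (by simp)

theorem tendsto_Phi_moebius (hαβ : α ≠ β) (hγ : ∀ k, α ≠ γ k) {τ : Fin (b + c) → ℂ}
    (hτ : Function.Injective τ) :
    Tendsto (fun s => Phi a b c (fun i => moebius α β (s * τ i)) (fun _ => β) γ) (𝓝[≠] 0)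
      (𝓝 ((α - β) ^ (a * b) * (∏ k, (α - γ k) ^ c) *
        dualJacobiTrudi (fun k => (γ k - β) / (α - γ k)) fun _ : Fin c => (b : ℤ))) := by
  have hscale : Tendsto (fun s : ℂ => ((∏ i, (1 - s * τ i)) ^ a)⁻¹) (𝓝[≠] 0) (𝓝 1) := by
    have hcont : ContinuousAt (fun s : ℂ => ((∏ i, (1 - s * τ i)) ^ a)⁻¹) 0 :=
      ContinuousAt.inv₀ (by fun_prop) (by simp)
    simpa using hcont.tendsto.mono_left nhdsWithin_le_nhds
  have hsum := tendsto_sum_powersetCard_prod_eval_div (b := b) (c := c) (by simp) hτ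
    (elemGen fun k => (γ k - β) / (α - γ k))
  have hlim := (hscale.mul hsum).const_mul ((α - β) ^ (a * b) * ∏ k, (α - γ k) ^ c)
  rw [one_mul] at hlim
  refine hlim.congr' ?_
  filter_upwards [eventually_one_sub_mul_ne_zero τ] with s hs
  exact (Phi_moebius hαβ hγ hs).symm

end MoebiusPhi

section PolynomialExtension

variable {a b c : ℕ} {P : (Fin (b + c) → ℂ) → (Fin (a + c) → ℂ) → (Fin (a + b) → ℂ) → ℂ}

theorem IsPolyFun.continuous (hP : IsPolyFun a b c P) :
    Continuous fun x : (Fin (b + c) → ℂ) × (Fin (a + c) → ℂ) × (Fin (a + b) → ℂ) =>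
      P x.1 x.2.1 x.2.2 := by
  obtain ⟨p, hp⟩ := hP
  simp only [hp]
  refine (MvPolynomial.continuous_eval p).comp (continuous_pi ?_)
  rintro (i | j | k) <;> simp only [Sum.elim_inl, Sum.elim_inr] <;> fun_prop

theorem eq_mul_dualJacobiTrudi_of_continuous
    (hP : Continuous fun x : (Fin (b + c) → ℂ) × (Fin (a + c) → ℂ) × (Fin (a + b) → ℂ) =>
      P x.1 x.2.1 x.2.2)
    (hagree : ∀ α β γ, Function.Injective α → P α β γ = Phi a b c α β γ)
    {α β : ℂ} (hαβ : α ≠ β) {γ : Fin (a + b) → ℂ} (hγ : ∀ k, α ≠ γ k) :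
    P (fun _ => α) (fun _ => β) γ =
      (α - β) ^ (a * b) * (∏ k, (α - γ k) ^ c) *
        dualJacobiTrudi (fun k => (γ k - β) / (α - γ k)) fun _ : Fin c => (b : ℤ) := by
  let τ : Fin (b + c) → ℂ := fun i => (i : ℕ)
  have hτ : Function.Injective τ := Nat.cast_injective.comp Fin.val_injective
  have hnodes : ContinuousAt (fun s (i : Fin (b + c)) => moebius α β (s * τ i)) 0 :=
    continuousAt_pi.mpr fun i => ContinuousAt.div (by fun_prop) (by fun_prop) (by simp)
  have hlim : Tendsto (fun s => P (fun i => moebius α β (s * τ i)) (fun _ => β) γ) (𝓝[≠] 0)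
      (𝓝 (P (fun _ => α) (fun _ => β) γ)) := by
    have hcont := hP.continuousAt.comp (x := 0) (hnodes.prodMk
      (continuousAt_const (y := ((fun _ => β, γ) : (Fin (a + c) → ℂ) × (Fin (a + b) → ℂ)))))
    simpa [Function.comp_def, moebius] using hcont.tendsto.mono_left nhdsWithin_le_nhds
  refine tendsto_nhds_unique hlim ((tendsto_Phi_moebius hαβ hγ hτ).congr' ?_)
  filter_upwards [eventually_one_sub_mul_ne_zero τ, self_mem_nhdsWithin] with s hs hs0
  exact (hagree _ _ _ (injective_moebius hs
    (fun i j hij => hτ (mul_left_cancel₀ hs0 hij)) hαβ)).symm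

theorem Phi_schur_formula_general (a b c : ℕ)
    (P : (Fin (b + c) → ℂ) → (Fin (a + c) → ℂ) → (Fin (a + b) → ℂ) → ℂ)
    (hP : Continuous fun x : (Fin (b + c) → ℂ) × (Fin (a + c) → ℂ) × (Fin (a + b) → ℂ) =>
      P x.1 x.2.1 x.2.2)
    (hagree : ∀ α β γ, Function.Injective α → P α β γ = Phi a b c α β γ)
    (α β : ℂ) (γ : Fin (a + b) → ℂ) (hγ : ∀ k, α ≠ γ k) :
    P (fun _ => α) (fun _ => β) γ =
      (α - β) ^ (a * b) * (∏ k, (α - γ k) ^ c) *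
        ∑ T ∈ Finset.univ.filter (fun T : Fin b → Fin c → Fin (a + b) => IsRectSSYT a b c T),
          ∏ i : Fin b, ∏ j : Fin c, (γ (T i j) - β) / (α - γ (T i j)) := by
  have hleft : Continuous fun z : ℂ => P (fun _ => α) (fun _ => z) γ :=
    hP.comp (g := fun x => P x.1 x.2.1 x.2.2)
      (f := fun z : ℂ => ((fun _ => α), (fun _ => z), γ)) (by fun_prop)
  have hright : Continuous fun z : ℂ => (α - z) ^ (a * b) * (∏ k, (α - γ k) ^ c) *
      ∑ T ∈ Finset.univ.filter (fun T : Fin b → Fin c → Fin (a + b) => IsRectSSYT a b c T),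
        ∏ i : Fin b, ∏ j : Fin c, (γ (T i j) - z) / (α - γ (T i j)) := by
    fun_prop
  refine congrFun (hleft.ext_on (dense_compl_singleton α) hright fun z hz => ?_) β
  rw [sum_isRectSSYT_eq_dualJacobiTrudi fun k => (γ k - z) / (α - γ k)]
  exact eq_mul_dualJacobiTrudi_of_continuous hP hagree (Ne.symm hz) hγ

end PolynomialExtension

/-- The Schur-function formula, Eq. (4.3) of the paper: with all `α_i = α` and all
`β_j = β`, any polynomial extension `P` of `Φ_{a,b,c}` evaluates to
`(α - β)^{ab} · ∏_k (α - γ_k)^c` times the Schur polynomial of the rectangular partition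
`(c^b)` at the numbers `(γ_k - β)/(α - γ_k)`, written as a sum over semistandard Young
tableaux of rectangular shape `b × c` with entries in `{1, …, a+b}`. -/
theorem Phi_schur_formula (a b c : ℕ)
    (P : (Fin (b + c) → ℂ) → (Fin (a + c) → ℂ) → (Fin (a + b) → ℂ) → ℂ)
    (hP : IsPolyFun a b c P)
    (hagree : ∀ α β γ, Function.Injective α → P α β γ = Phi a b c α β γ)
    (α β : ℂ) (γ : Fin (a + b) → ℂ) (hγ : ∀ k, α ≠ γ k) :
    P (fun _ => α) (fun _ => β) γ =
      (α - β) ^ (a * b) * (∏ k, (α - γ k) ^ c) *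
        ∑ T ∈ Finset.univ.filter (fun T : Fin b → Fin c → Fin (a + b) => IsRectSSYT a b c T),
          ∏ i : Fin b, ∏ j : Fin c, (γ (T i j) - β) / (α - γ (T i j)) :=
  Phi_schur_formula_general a b c P hP.continuous hagree α β γ hγ
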